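/- Let φ = {φ_i}_{i∈I} be a frame for a separable Hilbert space H with lower frame bound A_φ, let h ∈ H be a nonzero vector, and let {λ_i}_{i∈I} be a sequence of scalars such that ∑_{i∈I}|λ_i|² < α A_φ/‖h‖² for some α < 1. Then {φ_i}_{i∈I} and {φ_i + λ_i h}_{i∈I} are woven. -/

import Mathlib

/-!
Writing `ψ = φ + δ`, every weaving of `φ` and `ψ` is `φ` plus the restriction of `δ` to a subset of
the index set, and restriction preserves Bessel bounds. It therefore suffices to perturb a frame
with lower bound `A` by a Bessel sequence with bound `D < A`: by Minkowski's inequality in `ℓ²`, the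
analysis coefficients of the sum have norm at least `(√A - √D) * ‖f‖`. For the rank-one perturbation
`δ i = lam i • h`, the Cauchy–Schwarz inequality gives `D = (∑ ‖lam i‖ ^ 2) * ‖h‖ ^ 2`.
-/

open scoped ComplexInnerProductSpace

noncomputable section

variable {H : Type*} [NormedAddCommGroup H] [InnerProductSpace ℂ H] [CompleteSpace H]
variable {I : Type*} [Countable I]

/-- `φ` is a Bessel sequence with Bessel bound `B`. -/
def IsBesselWith (φ : I → H) (B : ℝ) : Prop :=
  ∀ f : H, Summable (fun i => ‖⟪f, φ i⟫‖ ^ 2) ∧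
    ∑' i, ‖⟪f, φ i⟫‖ ^ 2 ≤ B * ‖f‖ ^ 2

/-- `φ` is a frame with frame bounds `A ≤ B`. -/
def IsFrameWith (φ : I → H) (A B : ℝ) : Prop :=
  0 < A ∧ A ≤ B ∧ ∀ f : H, Summable (fun i => ‖⟪f, φ i⟫‖ ^ 2) ∧
    A * ‖f‖ ^ 2 ≤ ∑' i, ‖⟪f, φ i⟫‖ ^ 2 ∧ ∑' i, ‖⟪f, φ i⟫‖ ^ 2 ≤ B * ‖f‖ ^ 2

/-- `φ` is a frame (for some choice of bounds). -/
def IsFrame (φ : I → H) : Prop := ∃ A B : ℝ, IsFrameWith φ A B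

open Classical in
/-- The weaving of the families `φ` and `ψ` along the subset `J`:
it takes `φ i` for `i ∈ J` and `ψ i` for `i ∈ Jᶜ`. -/
def weaving (φ ψ : I → H) (J : Set I) : I → H := fun i => if i ∈ J then φ i else ψ i

/-- Two families are woven if there are universal frame bounds valid for all weavings. -/
def Woven (φ ψ : I → H) : Prop :=
  ∃ A B : ℝ, ∀ J : Set I, IsFrameWith (weaving φ ψ J) A B

section Minkowski

variable {ι F : Type*} [SeminormedAddCommGroup F] {a b : ι → F}

lemma summable_norm_add_sq (ha : Summable fun i => ‖a i‖ ^ 2) (hb : Summable fun i => ‖b i‖ ^ 2) :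
    Summable fun i => ‖a i + b i‖ ^ 2 :=
  ((ha.add hb).mul_left 2).of_nonneg_of_le (fun _ => sq_nonneg _) fun i =>
    (pow_le_pow_left₀ (norm_nonneg _) (norm_add_le (a i) (b i)) 2).trans add_sq_le

lemma sqrt_tsum_norm_add_sq_le (ha : Summable fun i => ‖a i‖ ^ 2)
    (hb : Summable fun i => ‖b i‖ ^ 2) :
    √(∑' i, ‖a i + b i‖ ^ 2) ≤ √(∑' i, ‖a i‖ ^ 2) + √(∑' i, ‖b i‖ ^ 2) := by
  have minkowski : Summable (fun i => (‖a i‖ + ‖b i‖) ^ 2) ∧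
      √(∑' i, (‖a i‖ + ‖b i‖) ^ 2) ≤ √(∑' i, ‖a i‖ ^ 2) + √(∑' i, ‖b i‖ ^ 2) := by
    simpa only [Real.rpow_two, ← Real.sqrt_eq_rpow] using
      Real.Lp_add_le_tsum_of_nonneg one_le_two (fun i => norm_nonneg (a i))
        (fun i => norm_nonneg (b i)) (by simpa only [Real.rpow_two] using ha)
        (by simpa only [Real.rpow_two] using hb)
  refine (Real.sqrt_le_sqrt ?_).trans minkowski.2
  exact (summable_norm_add_sq ha hb).tsum_le_tsum
    (fun i => pow_le_pow_left₀ (norm_nonneg _) (norm_add_le (a i) (b i)) 2) minkowski.1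

lemma sqrt_tsum_norm_sq_sub_le (ha : Summable fun i => ‖a i‖ ^ 2)
    (hb : Summable fun i => ‖b i‖ ^ 2) :
    √(∑' i, ‖a i‖ ^ 2) - √(∑' i, ‖b i‖ ^ 2) ≤ √(∑' i, ‖a i + b i‖ ^ 2) := by
  have h := sqrt_tsum_norm_add_sq_le (summable_norm_add_sq ha hb)
    (b := fun i => -b i) (by simpa only [norm_neg] using hb)
  simp only [add_neg_cancel_right, norm_neg] at h
  exact sub_le_iff_le_add.2 h

end Minkowski

section Frames

variable {E : Type*} [NormedAddCommGroup E] [InnerProductSpace ℂ E] {ι : Type*}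
  {φ δ : ι → E} {A B D : ℝ}

lemma IsFrameWith.isBesselWith (hφ : IsFrameWith φ A B) : IsBesselWith φ B :=
  fun f => ⟨(hφ.2.2 f).1, (hφ.2.2 f).2.2⟩

lemma IsFrameWith.mul_norm_le_sqrt_tsum (hφ : IsFrameWith φ A B) (f : E) :
    √A * ‖f‖ ≤ √(∑' i, ‖⟪f, φ i⟫‖ ^ 2) := by
  simpa only [Real.sqrt_mul hφ.1.le, Real.sqrt_sq (norm_nonneg f)] using
    Real.sqrt_le_sqrt (hφ.2.2 f).2.1

namespace IsBesselWith

lemma sqrt_tsum_le (hδ : IsBesselWith δ D) (f : E) :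
    √(∑' i, ‖⟪f, δ i⟫‖ ^ 2) ≤ √D * ‖f‖ := by
  simpa only [Real.sqrt_mul' D (sq_nonneg ‖f‖), Real.sqrt_sq (norm_nonneg f)] using
    Real.sqrt_le_sqrt (hδ f).2

lemma add (hφ : IsBesselWith φ B) (hδ : IsBesselWith δ D) :
    IsBesselWith (φ + δ) ((√B + √D) ^ 2) := by
  intro f
  simp only [Pi.add_apply, inner_add_right]
  refine ⟨summable_norm_add_sq (hφ f).1 (hδ f).1, ?_⟩
  have sqrt_le : √(∑' i, ‖⟪f, φ i⟫ + ⟪f, δ i⟫‖ ^ 2) ≤ (√B + √D) * ‖f‖ :=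
    calc √(∑' i, ‖⟪f, φ i⟫ + ⟪f, δ i⟫‖ ^ 2)
        ≤ √(∑' i, ‖⟪f, φ i⟫‖ ^ 2) + √(∑' i, ‖⟪f, δ i⟫‖ ^ 2) :=
          sqrt_tsum_norm_add_sq_le (hφ f).1 (hδ f).1
      _ ≤ √B * ‖f‖ + √D * ‖f‖ := add_le_add (hφ.sqrt_tsum_le f) (hδ.sqrt_tsum_le f)
      _ = (√B + √D) * ‖f‖ := (add_mul _ _ _).symm
  rw [← mul_pow]
  exact (Real.sqrt_le_iff.1 sqrt_le).2

lemma indicator (hδ : IsBesselWith δ D) (J : Set ι) : IsBesselWith (J.indicator δ) D := by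
  intro f
  have coeff_le (i : ι) : ‖⟪f, J.indicator δ i⟫‖ ^ 2 ≤ ‖⟪f, δ i⟫‖ ^ 2 := by
    by_cases hi : i ∈ J
    · rw [Set.indicator_of_mem hi]
    · rw [Set.indicator_of_notMem hi, inner_zero_right, norm_zero, zero_pow two_ne_zero]
      exact sq_nonneg _
  have hs : Summable fun i => ‖⟪f, J.indicator δ i⟫‖ ^ 2 :=
    (hδ f).1.of_nonneg_of_le (fun _ => sq_nonneg _) coeff_le
  exact ⟨hs, (hs.tsum_le_tsum coeff_le (hδ f).1).trans (hδ f).2⟩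

end IsBesselWith

lemma isBesselWith_smul_const {c : ι → ℂ} (hc : Summable fun i => ‖c i‖ ^ 2) (h : E) :
    IsBesselWith (fun i => c i • h) ((∑' i, ‖c i‖ ^ 2) * ‖h‖ ^ 2) := by
  intro f
  simp only [inner_smul_right, norm_mul, mul_pow, tsum_mul_right]
  refine ⟨hc.mul_right _, ?_⟩
  calc (∑' i, ‖c i‖ ^ 2) * ‖⟪f, h⟫‖ ^ 2
      ≤ (∑' i, ‖c i‖ ^ 2) * (‖f‖ * ‖h‖) ^ 2 := by
        gcongr
        exact norm_inner_le_norm f h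
    _ = (∑' i, ‖c i‖ ^ 2) * ‖h‖ ^ 2 * ‖f‖ ^ 2 := by ring

lemma IsFrameWith.add_isBesselWith (hφ : IsFrameWith φ A B) (hδ : IsBesselWith δ D) (hD : D < A) :
    IsFrameWith (φ + δ) ((√A - √D) ^ 2) ((√B + √D) ^ 2) := by
  have gap_pos : 0 < √A - √D := sub_pos.2 ((Real.sqrt_lt_sqrt_iff_of_pos hφ.1).2 hD)
  have bounds_le : √A - √D ≤ √B + √D := by
    linarith [Real.sqrt_le_sqrt hφ.2.1, Real.sqrt_nonneg D]
  refine ⟨pow_pos gap_pos 2, pow_le_pow_left₀ gap_pos.le bounds_le 2, fun f => ?_⟩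
  obtain ⟨summable_coeff, upper⟩ := hφ.isBesselWith.add hδ f
  refine ⟨summable_coeff, ?_, upper⟩
  have le_sqrt : (√A - √D) * ‖f‖ ≤ √(∑' i, ‖⟪f, (φ + δ) i⟫‖ ^ 2) :=
    calc (√A - √D) * ‖f‖ = √A * ‖f‖ - √D * ‖f‖ := sub_mul _ _ _
      _ ≤ √(∑' i, ‖⟪f, φ i⟫‖ ^ 2) - √(∑' i, ‖⟪f, δ i⟫‖ ^ 2) :=
          sub_le_sub (hφ.mul_norm_le_sqrt_tsum f) (hδ.sqrt_tsum_le f)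
      _ ≤ √(∑' i, ‖⟪f, φ i⟫ + ⟪f, δ i⟫‖ ^ 2) :=
          sqrt_tsum_norm_sq_sub_le (hφ.2.2 f).1 (hδ f).1
      _ = √(∑' i, ‖⟪f, (φ + δ) i⟫‖ ^ 2) := by simp only [Pi.add_apply, inner_add_right]
  rw [← mul_pow]
  exact (Real.le_sqrt (mul_nonneg gap_pos.le (norm_nonneg f))
    (tsum_nonneg fun _ => sq_nonneg _)).1 le_sqrt

lemma weaving_add_right {M : Type*} [AddZeroClass M] (φ δ : ι → M) (J : Set ι) :
    weaving φ (φ + δ) J = φ + Jᶜ.indicator δ := by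
  ext i
  by_cases hi : i ∈ J <;> simp [weaving, hi]

theorem IsFrameWith.woven_add (hφ : IsFrameWith φ A B) (hδ : IsBesselWith δ D) (hD : D < A) :
    Woven φ (φ + δ) :=
  ⟨(√A - √D) ^ 2, (√B + √D) ^ 2, fun J =>
    weaving_add_right φ δ J ▸ hφ.add_isBesselWith (hδ.indicator Jᶜ) hD⟩

theorem woven_of_rank_one_perturbation_general (hφ : IsFrameWith φ A B) (h : E) {lam : ι → ℂ}
    (hlam : Summable fun i => ‖lam i‖ ^ 2) (hsmall : (∑' i, ‖lam i‖ ^ 2) * ‖h‖ ^ 2 < A) :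
    Woven φ (fun i => φ i + lam i • h) :=
  hφ.woven_add (isBesselWith_smul_const hlam h) hsmall

end Frames

/-- Let `φ` be a frame with lower bound `Aφ`, `h ≠ 0`, and `lam`
a sequence of scalars with `∑ |lam i|² < α Aφ / ‖h‖²` for some `α < 1`. Then `φ` and
`{φ i + lam i • h}` are woven. -/
theorem woven_of_rank_one_perturbation (φ : I → H) (Aφ Bφ : ℝ)
    (hφ : IsFrameWith φ Aφ Bφ) (h : H) (hh : h ≠ 0)
    (lam : I → ℂ) (hlam : Summable (fun i => ‖lam i‖ ^ 2))
    (α : ℝ) (hα : α < 1)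
    (hsmall : ∑' i, ‖lam i‖ ^ 2 < α * Aφ / ‖h‖ ^ 2) :
    Woven φ (fun i => φ i + lam i • h) :=
  woven_of_rank_one_perturbation_general hφ h hlam <|
    ((lt_div_iff₀ (by positivity)).1 hsmall).trans (mul_lt_of_lt_one_left hφ.1 hα)
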